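/- Let k ≥ 3 be odd, a = (k+1)/2, and let L ⊆ ℤ⁴ be the ℤ-span of v₁ = (-a+1, a+1, -a+1, a), v₂ = (a+1, a+1, -a+2, a-1), v₃ = (-a-1, a-1, a-1, -a), v₄ = (-a, a, a, a-1). Then for every x ∈ ℤ⁴ there exists w ∈ L with ‖x - w‖₁ ≤ k, where ‖y‖₁ = |y₁| + |y₂| + |y₃| + |y₄|. (Equivalently, S_k + L = ℤ⁴, where S_k is the set of points of ℤ⁴ at l¹-distance at most k from the origin.) -/

import Mathlib

/-!
Every coset of `L` has an `ℓ¹`-shortest element, and moving a shortest element towards `0` keeps it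
shortest. So if some coset misses the ball of radius `k = 2a - 1`, there is a shortest `x` with
`‖x‖₁ = 2a` exactly.

The lattice contains four nearly axial vectors `pᵢ ≈ 2a eᵢ`, whose matrix is skew-symmetric off the
diagonal with entries in `{0, 1, -1}` there and has trace `8a - 2`, as well as all the corners
`w = ½ ∑ sᵢ pᵢ` with `sᵢ = ±1`. Take for `s` the signs of `x`. Comparing `x` with `x ∓ pᵢ` bounds
`|xᵢ|`, and by skew-symmetry these bounds say exactly that `x` lies in the box spanned by `0` and
`w`. Hence `‖x - w‖₁ = ‖w‖₁ - ‖x‖₁`, so that `‖x‖₁ ≤ ½ ‖w‖₁`. Skew-symmetry also gives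
`‖w‖₁ = ½ (8a - 2) = 4a - 1`, contradicting `‖x‖₁ = 2a`.

A zero coordinate of `x` leaves its sign free. Some choice keeps `x` in the box because two
coordinates insisting on opposite choices would be so large that `‖x‖₁ > 2a`; the only exception is
`x₀ = x₁ = 0 ≤ x₂ x₃`, where explicit lattice vectors are closer to `x` than `0` is.
-/

open Finset Matrix

section ShortestPoints

variable {ι : Type*} [Fintype ι] {L : Submodule ℤ (ι → ℤ)} {x y : ι → ℤ}

/-- The Manhattan norm `∑ |xᵢ|` on `ℤ^ι`; the norm Mathlib puts on `ι → ℤ` is the sup norm. -/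
def l1Norm (x : ι → ℤ) : ℤ := ∑ i, |x i|

theorem l1Norm_nonneg (x : ι → ℤ) : 0 ≤ l1Norm x := sum_nonneg fun _ _ ↦ abs_nonneg _

theorem l1Norm_neg (x : ι → ℤ) : l1Norm (-x) = l1Norm x := by simp [l1Norm]

theorem l1Norm_add_le (x y : ι → ℤ) : l1Norm (x + y) ≤ l1Norm x + l1Norm y := by
  rw [l1Norm, l1Norm, l1Norm, ← sum_add_distrib]
  exact sum_le_sum fun i _ ↦ abs_add_le (x i) (y i)

theorem l1Norm_sub_comm (x y : ι → ℤ) : l1Norm (x - y) = l1Norm (y - x) := by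
  rw [← l1Norm_neg, neg_sub]

theorem l1Norm_sub_of_between {s : ι → ℤ} (hs : ∀ i, s i = 1 ∨ s i = -1)
    (h₀ : ∀ i, 0 ≤ s i * x i) (hle : ∀ i, s i * x i ≤ s i * y i) :
    l1Norm (y - x) = l1Norm y - l1Norm x := by
  simp only [l1Norm, ← sum_sub_distrib, Pi.sub_apply]
  refine sum_congr rfl fun i _ ↦ ?_
  have h := h₀ i
  have h' := hle i
  rcases hs i with hi | hi <;> rw [hi] at h h' <;> grind

theorem l1Norm_sub_single_sign [DecidableEq ι] {i : ι} (hi : x i ≠ 0) :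
    l1Norm (x - Pi.single i (x i).sign) = l1Norm x - 1 := by
  have hterm (j : ι) :
      |(x - Pi.single i (x i).sign : ι → ℤ) j| = |x j| - if j = i then 1 else 0 := by
    obtain rfl | hj := eq_or_ne j i
    · rcases hi.lt_or_gt with h | h
      · simp only [Int.sign_eq_neg_one_of_neg h, Pi.sub_apply, Pi.single_eq_same, if_true]
        grind
      · simp only [Int.sign_eq_one_of_pos h, Pi.sub_apply, Pi.single_eq_same, if_true]
        grind
    · simp [hj]
  simp only [l1Norm, hterm, sum_sub_distrib, sum_ite_eq', mem_univ, if_true]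

theorem l1Norm_single [DecidableEq ι] (i : ι) (c : ℤ) : l1Norm (Pi.single i c) = |c| := by
  rw [l1Norm, sum_eq_single i] <;> simp +contextual

/-- `x` is shortest modulo `L` if it is an `ℓ¹`-shortest element of its coset `x + L`. -/
def IsShortest (L : Submodule ℤ (ι → ℤ)) (x : ι → ℤ) : Prop :=
  ∀ w ∈ L, l1Norm x ≤ l1Norm (x - w)

theorem exists_isShortest_sub (L : Submodule ℤ (ι → ℤ)) (x : ι → ℤ) :
    ∃ w ∈ L, IsShortest L (x - w) := by
  obtain ⟨w, hw, hmin⟩ := exists_minimalFor_of_wellFoundedLT (· ∈ L)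
    (fun w ↦ (l1Norm (x - w)).toNat) ⟨0, L.zero_mem⟩
  refine ⟨w, hw, fun v hv ↦ ?_⟩
  have h := (le_total _ _).elim id (hmin (L.add_mem hw hv))
  rw [sub_sub]
  have := l1Norm_nonneg (x - (w + v))
  have := l1Norm_nonneg (x - w)
  simp only at h
  omega

namespace IsShortest

theorem neg (hx : IsShortest L x) : IsShortest L (-x) := fun w hw ↦ by
  have h := hx (-w) (L.neg_mem hw)
  rwa [← l1Norm_neg, neg_neg, ← l1Norm_neg (-x - w), neg_sub', neg_neg]

theorem of_geodesic (hx : IsShortest L x) (h : l1Norm x = l1Norm y + l1Norm (x - y)) :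
    IsShortest L y := fun w hw ↦ by
  have hadd := l1Norm_add_le (y - w) (x - y)
  rw [show y - w + (x - y) = x - w by abel] at hadd
  linarith [hx w hw]

theorem exists_l1Norm_eq (hx : IsShortest L x) {n : ℤ} (hn₀ : 0 ≤ n) (hn : n ≤ l1Norm x) :
    ∃ y, IsShortest L y ∧ l1Norm y = n := by
  classical
  induction n, hn using Int.leInductionDown with
  | base => exact ⟨x, hx, rfl⟩
  | pred n _ ih =>
    obtain ⟨y, hy, hyn⟩ := ih (by omega)
    obtain ⟨i, hi⟩ : ∃ i, y i ≠ 0 := by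
      by_contra! h
      simp only [l1Norm, h, abs_zero, sum_const_zero] at hyn
      omega
    have hstep := l1Norm_sub_single_sign hi
    refine ⟨y - Pi.single i (y i).sign, hy.of_geodesic ?_, by rw [hstep, hyn]⟩
    rw [hstep, sub_sub_cancel, l1Norm_single, Int.abs_sign_of_ne_zero hi]
    ring

theorem two_mul_l1Norm_le (hx : IsShortest L x) {s w : ι → ℤ} (hs : ∀ i, s i = 1 ∨ s i = -1)
    (hw : w ∈ L) (h₀ : ∀ i, 0 ≤ s i * x i) (hle : ∀ i, s i * x i ≤ s i * w i) :
    2 * l1Norm x ≤ l1Norm w := by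
  have h := hx w hw
  rw [l1Norm_sub_comm, l1Norm_sub_of_between hs h₀ hle] at h
  linarith

end IsShortest

end ShortestPoints

section AxialVectors

variable {ι : Type*} [Fintype ι] {L : Submodule ℤ (ι → ℤ)} {P : Matrix ι ι ℤ} {s x : ι → ℤ}

theorem exists_mem_two_nsmul_eq_vecMul (hP : ∀ i, P i ∈ L) {c : ι → ℤ} (hc : c ∈ L)
    (hcP : 2 • c = 1 ᵥ* P) (hs : ∀ i, s i = 1 ∨ s i = -1) : ∃ w ∈ L, 2 • w = s ᵥ* P := by
  obtain ⟨t, ht⟩ : ∃ t : ι → ℤ, s = 1 - 2 • t := by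
    choose t ht using fun i ↦ show ∃ t : ℤ, s i = 1 - 2 * t by
      rcases hs i with h | h
      exacts [⟨0, by simp [h]⟩, ⟨1, by simp [h]⟩]
    exact ⟨t, funext fun i ↦ by simp [ht]⟩
  refine ⟨c - t ᵥ* P, L.sub_mem hc ?_, ?_⟩
  · rw [vecMul_eq_sum]
    exact L.sum_mem fun i _ ↦ L.smul_mem _ (hP i)
  · rw [nsmul_sub, hcP, ht, sub_vecMul, smul_vecMul]

theorem vecMul_dotProduct_self_of_skew (hskew : ∀ i j, i ≠ j → P j i = -P i j)
    (hs : ∀ i, s i = 1 ∨ s i = -1) : s ᵥ* P ⬝ᵥ s = P.trace := by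
  classical
  have hsq (i : ι) : s i * s i = 1 := by rcases hs i with h | h <;> simp [h]
  have hsymm : P + Pᵀ = 2 • diagonal P.diag := by
    ext i j
    obtain rfl | hij := eq_or_ne i j
    · simp [two_mul]
    · simp [hij, hskew i j hij]
  have hsum : s ᵥ* P ⬝ᵥ s + s ᵥ* Pᵀ ⬝ᵥ s = 2 * P.trace := by
    rw [← add_dotProduct, ← vecMul_add, hsymm, vecMul_smul, smul_dotProduct]
    simp [dotProduct, vecMul_diagonal, trace, mul_right_comm _ _ (s _), hsq]
  rw [vecMul_transpose, dotProduct_comm (P *ᵥ s), dotProduct_mulVec] at hsum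
  linarith

variable [DecidableEq ι]

/-- The upper bound on `2 * |x i|` that comes from comparing `x` with `x - s i • P i` when `x` is
shortest and `s` is its sign vector. The summand at `j`, which is `|P i j|` where `s j = 0`, bounds
the change `|x j - s i * P i j| - |x j|` if `|P i j| ≤ 1`. -/
def axialBound (P : Matrix ι ι ℤ) (s : ι → ℤ) (i : ι) : ℤ :=
  P i i + ∑ j ∈ univ.erase i, (|P i j| * (1 - |s j|) - s i * P i j * s j)

/-- `s` is a choice of signs for `x` that respects all the bounds `axialBound P s`. The value
`s i = 0`, possible only where `x i = 0`, encodes a sign not chosen yet. Once all signs are chosen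
and `P` is skew-symmetric off the diagonal, the bounds say that `x` lies in the box spanned by `0`
and `½ s ᵥ* P`. -/
structure IsPartialSigning (P : Matrix ι ι ℤ) (s x : ι → ℤ) : Prop where
  abs_le_one : ∀ i, |s i| ≤ 1
  mul_eq_abs : ∀ i, s i * x i = |x i|
  two_mul_abs_le : ∀ i, 2 * |x i| ≤ axialBound P s i

theorem abs_sub_mul_le_of_abs_le_one {σ c z : ℤ} (hσ : |σ| ≤ 1) (hc : |c| ≤ 1) :
    |z - σ * c| ≤ |z| + (|c| * (1 - |z.sign|) - σ * c * z.sign) := by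
  obtain rfl | rfl | rfl : σ = -1 ∨ σ = 0 ∨ σ = 1 := by rw [abs_le] at hσ; omega
  all_goals obtain rfl | rfl | rfl : c = -1 ∨ c = 0 ∨ c = 1 := by rw [abs_le] at hc; omega
  all_goals obtain h | rfl | h := lt_trichotomy z 0
  all_goals simp [Int.sign_eq_neg_one_of_neg, Int.sign_eq_one_of_pos, *]
  all_goals grind

theorem abs_sub_sign_mul_le {z m : ℤ} (h : |z| ≤ m) : |z - z.sign * m| ≤ m - |z| := by
  obtain hz | rfl | hz := lt_trichotomy z 0
  · rw [Int.sign_eq_neg_one_of_neg hz]; grind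
  · simpa using h
  · rw [Int.sign_eq_one_of_pos hz]; grind

theorem abs_sign_le_one (z : ℤ) : |z.sign| ≤ 1 := by
  rcases Int.sign_trichotomy z with h | h | h <;> simp [h]

theorem IsShortest.isPartialSigning_sign (hx : IsShortest L x) (hP : ∀ i, P i ∈ L)
    (hoff : ∀ i j, i ≠ j → |P i j| ≤ 1) (hdiag : ∀ i, |x i| ≤ P i i) :
    IsPartialSigning P (fun i ↦ (x i).sign) x where
  abs_le_one i := abs_sign_le_one _
  mul_eq_abs i := Int.sign_mul_self_eq_abs _
  two_mul_abs_le i := by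
    set σ := (x i).sign
    have hred := hx (σ • P i) (L.smul_mem σ (hP i))
    have hi : |x i - σ * P i i| ≤ P i i - |x i| := abs_sub_sign_mul_le (hdiag i)
    have hj : ∑ j ∈ univ.erase i, |x j - σ * P i j| ≤
        ∑ j ∈ univ.erase i, (|x j| + (|P i j| * (1 - |(x j).sign|) - σ * P i j * (x j).sign)) :=
      sum_le_sum fun j hj ↦
        abs_sub_mul_le_of_abs_le_one (abs_sign_le_one _) (hoff i j (ne_of_mem_erase hj).symm)
    simp only [l1Norm, Pi.sub_apply, Pi.smul_apply, smul_eq_mul,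
      ← add_sum_erase univ _ (mem_univ i)] at hred
    rw [sum_add_distrib] at hj
    rw [axialBound]
    linarith

theorem axialBound_nonneg {i : ι} (hdom : ∑ j ∈ univ.erase i, |P i j| ≤ P i i)
    (hs : ∀ j, |s j| ≤ 1) : 0 ≤ axialBound P s i := by
  have hterm (j : ι) : -|P i j| ≤ |P i j| * (1 - |s j|) - s i * P i j * s j := by
    have hle : s i * P i j * s j ≤ |P i j| * |s j| := by
      rw [mul_comm (s i), mul_assoc]
      refine (le_abs_self _).trans ?_
      rw [abs_mul, abs_mul]
      gcongr
      exact mul_le_of_le_one_left (abs_nonneg _) (hs i)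
    nlinarith [mul_le_mul_of_nonneg_left (hs j) (abs_nonneg (P i j))]
  have hsum := sum_le_sum fun j (_ : j ∈ univ.erase i) ↦ hterm j
  rw [sum_neg_distrib] at hsum
  rw [axialBound]
  linarith

theorem axialBound_update {i j : ι} (hij : i ≠ j) (hj : s j = 0) {t : ℤ} (ht : |t| = 1) :
    axialBound P (Function.update s j t) i = axialBound P s i - (|P i j| + s i * P i j * t) := by
  have hmem : j ∈ univ.erase i := mem_erase.2 ⟨hij.symm, mem_univ j⟩
  have hrest : ∀ l ∈ (univ.erase i).erase j, Function.update s j t l = s l := fun l hl ↦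
    Function.update_of_ne (ne_of_mem_erase hl) _ _
  rw [axialBound, axialBound, ← add_sum_erase _ _ hmem, ← add_sum_erase _ _ hmem,
    Function.update_of_ne hij, Function.update_self, ht, hj, sum_congr rfl fun l hl ↦ by
      rw [hrest l hl]]
  simp only [abs_zero, sub_zero, mul_one, mul_zero, sub_self]
  ring

namespace IsPartialSigning

theorem eq_one_or_eq_neg_one (h : IsPartialSigning P s x) {i : ι} (hi : s i ≠ 0) :
    s i = 1 ∨ s i = -1 := by
  grind [h.abs_le_one i]

theorem eq_sign (h : IsPartialSigning P s x) {i : ι} (hi : x i ≠ 0) : s i = (x i).sign :=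
  mul_right_cancel₀ hi ((h.mul_eq_abs i).trans (Int.sign_mul_self_eq_abs _).symm)

theorem eq_neg_of_mul_neg (h : IsPartialSigning P s x) {i j : ι} (hij : x i * x j < 0) :
    s i = -s j := by
  rw [h.eq_sign (left_ne_zero_of_mul hij.ne), h.eq_sign (right_ne_zero_of_mul hij.ne)]
  rcases mul_neg_iff.1 hij with ⟨hi, hj⟩ | ⟨hi, hj⟩
  · rw [Int.sign_eq_one_of_pos hi, Int.sign_eq_neg_one_of_neg hj, neg_neg]
  · rw [Int.sign_eq_neg_one_of_neg hi, Int.sign_eq_one_of_pos hj]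

theorem two_mul_abs_le_mul_vecMul (h : IsPartialSigning P s x)
    (hskew : ∀ i j, i ≠ j → P j i = -P i j) (hs : ∀ i, s i ≠ 0) (i : ι) :
    2 * |x i| ≤ s i * (s ᵥ* P) i := by
  have habs (j : ι) : |s j| = 1 := by
    rcases h.eq_one_or_eq_neg_one (hs j) with h | h <;> simp [h]
  have hsq : s i * s i = 1 := by rw [← abs_mul_abs_self, habs, one_mul]
  refine (h.two_mul_abs_le i).trans_eq ?_
  rw [axialBound, vecMul, dotProduct, ← add_sum_erase univ _ (mem_univ i), mul_add, ← mul_assoc,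
    hsq, one_mul, mul_sum]
  congr 1
  refine sum_congr rfl fun j hj ↦ ?_
  rw [habs, hskew i j (ne_of_mem_erase hj).symm]
  ring

theorem exists_axialBound_lt (h : IsPartialSigning P s x)
    (hdom : ∀ i, ∑ j ∈ univ.erase i, |P i j| ≤ P i i) (hoff : ∀ i j, i ≠ j → |P i j| ≤ 1)
    {j : ι} (hj : s j = 0) {t : ℤ} (ht : |t| = 1)
    (hext : ¬ IsPartialSigning P (Function.update s j t) x) :
    ∃ i, s i * P i j = t ∧ axialBound P s i < 2 * |x i| + 2 := by
  have hxj : x j = 0 := by simpa [hj] using (h.mul_eq_abs j).symm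
  have hs' (i : ι) : |Function.update s j t i| ≤ 1 := by
    obtain rfl | hij := eq_or_ne i j
    · simp [ht]
    · simpa [hij] using h.abs_le_one i
  have hsx' (i : ι) : Function.update s j t i * x i = |x i| := by
    obtain rfl | hij := eq_or_ne i j
    · simp [hxj]
    · simpa [hij] using h.mul_eq_abs i
  obtain ⟨i, hi⟩ : ∃ i, axialBound P (Function.update s j t) i < 2 * |x i| := by
    by_contra! hle
    exact hext ⟨hs', hsx', hle⟩
  have hxi : x i ≠ 0 := fun hxi ↦ by
    have := axialBound_nonneg (hdom i) hs'
    simp only [hxi, abs_zero, mul_zero] at hi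
    linarith
  have hij : i ≠ j := by rintro rfl; exact hxi hxj
  rw [axialBound_update hij hj ht] at hi
  have hpos : 0 < |P i j| + s i * P i j * t := by linarith [h.two_mul_abs_le i]
  have hsi : s i = 1 ∨ s i = -1 := h.eq_one_or_eq_neg_one fun hsi ↦
    hxi <| abs_eq_zero.1 <| by rw [← h.mul_eq_abs, hsi, zero_mul]
  refine ⟨i, ?_, ?_⟩
  · rcases hsi with h | h <;> rw [h] at hpos ⊢ <;> grind [hoff i j hij]
  · rcases hsi with h | h <;> rw [h] at hi <;> grind [hoff i j hij]

theorem exists_update_of_not_conflict (h : IsPartialSigning P s x)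
    (hdom : ∀ i, ∑ j ∈ univ.erase i, |P i j| ≤ P i i) (hoff : ∀ i j, i ≠ j → |P i j| ≤ 1) {j : ι}
    (hconflict : s j = 0 → ∀ i ≠ j, ∀ i' ≠ j,
      s i * P i j = 1 → axialBound P s i < 2 * |x i| + 2 →
      s i' * P i' j = -1 → axialBound P s i' < 2 * |x i'| + 2 → False) :
    ∃ t ≠ 0, IsPartialSigning P (Function.update s j t) x := by
  by_cases hj : s j ≠ 0
  · exact ⟨s j, hj, by rwa [Function.update_eq_self]⟩
  rw [not_not] at hj
  by_contra! hext
  have tight {t : ℤ} (ht : |t| = 1) :=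
    h.exists_axialBound_lt hdom hoff hj ht (hext t (by rintro rfl; simp at ht))
  obtain ⟨i, hi, hxi⟩ := tight abs_one
  obtain ⟨i', hi', hxi'⟩ := tight (t := -1) (by simp)
  refine hconflict hj i ?_ i' ?_ hi hxi hi' hxi' <;> rintro rfl <;> simp [hj] at hi hi'

end IsPartialSigning

theorem IsShortest.four_mul_l1Norm_le_trace (hx : IsShortest L x)
    (hskew : ∀ i j, i ≠ j → P j i = -P i j) (h : IsPartialSigning P s x) (hs : ∀ i, s i ≠ 0)
    (hcorner : ∃ w ∈ L, 2 • w = s ᵥ* P) :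
    4 * l1Norm x ≤ P.trace := by
  obtain ⟨w, hw, hwP⟩ := hcorner
  have hsign (i : ι) := h.eq_one_or_eq_neg_one (hs i)
  have hsx (i : ι) : 0 ≤ s i * x i := by simp [h.mul_eq_abs]
  have hxw (i : ι) : s i * x i ≤ s i * w i := by
    have hi := h.two_mul_abs_le_mul_vecMul hskew hs i
    rw [← hwP, ← h.mul_eq_abs, Pi.smul_apply, mul_smul_comm, nsmul_eq_mul] at hi
    push_cast at hi
    linarith
  have hnorm : 2 * l1Norm w = P.trace := by
    rw [← vecMul_dotProduct_self_of_skew hskew hsign, ← hwP, l1Norm, mul_sum, dotProduct]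
    refine sum_congr rfl fun i _ ↦ ?_
    have hi := (hsx i).trans (hxw i)
    rw [Pi.smul_apply, nsmul_eq_mul, mul_assoc, mul_comm (w i)]
    congr 1
    rcases hsign i with hsi | hsi <;> rw [hsi] at hi ⊢ <;> grind
  linarith [hx.two_mul_l1Norm_le hsign hw hsx hxw]

end AxialVectors

section CoveringLattice

/-- The lattice `L` of the theorem, for an arbitrary integer `a`. -/
def coveringLattice (a : ℤ) : Submodule ℤ (Fin 4 → ℤ) :=
  Submodule.span ℤ {![-a + 1, a + 1, -a + 1, a], ![a + 1, a + 1, -a + 2, a - 1],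
    ![-a - 1, a - 1, a - 1, -a], ![-a, a, a, a - 1]}

/-- The nearly axial lattice vectors `v₂ - v₁`, `v₂ + v₃`, `v₄ - v₁` and `v₄ - v₃`, as rows. -/
def axialMatrix (a : ℤ) : Matrix (Fin 4) (Fin 4) ℤ :=
  !![2 * a, 0, 1, -1; 0, 2 * a, 1, -1; -1, -1, 2 * a - 1, -1; 1, 1, 1, 2 * a - 1]

variable {a : ℤ} {s x : Fin 4 → ℤ}

theorem axialMatrix_mem_coveringLattice (a : ℤ) (i : Fin 4) :
    axialMatrix a i ∈ coveringLattice a := by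
  have h₁ : ![-a + 1, a + 1, -a + 1, a] ∈ coveringLattice a := Submodule.subset_span (by simp)
  have h₂ : ![a + 1, a + 1, -a + 2, a - 1] ∈ coveringLattice a := Submodule.subset_span (by simp)
  have h₃ : ![-a - 1, a - 1, a - 1, -a] ∈ coveringLattice a := Submodule.subset_span (by simp)
  have h₄ : ![-a, a, a, a - 1] ∈ coveringLattice a := Submodule.subset_span (by simp)
  fin_cases i
  · convert sub_mem h₂ h₁ using 1
    ext j; fin_cases j <;> simp [axialMatrix]; ring
  · convert add_mem h₂ h₃ using 1
    ext j; fin_cases j <;> simp [axialMatrix] <;> ring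
  · convert sub_mem h₄ h₁ using 1
    ext j; fin_cases j <;> simp [axialMatrix]; ring
  · convert sub_mem h₄ h₃ using 1
    ext j; fin_cases j <;> simp [axialMatrix]; ring

theorem corner_mem_coveringLattice (a : ℤ) : ![a, a, a + 1, a - 2] ∈ coveringLattice a := by
  have h₄ : ![-a, a, a, a - 1] ∈ coveringLattice a := Submodule.subset_span (by simp)
  convert add_mem h₄ (axialMatrix_mem_coveringLattice a 0) using 1
  ext j; fin_cases j <;> simp [axialMatrix] <;> ring

theorem two_nsmul_corner (a : ℤ) : 2 • ![a, a, a + 1, a - 2] = 1 ᵥ* axialMatrix a := by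
  ext j; fin_cases j <;> simp [axialMatrix, vecMul, dotProduct, Fin.sum_univ_four] <;> ring

theorem trace_axialMatrix (a : ℤ) : (axialMatrix a).trace = 8 * a - 2 := by
  rw [trace, Fin.sum_univ_four]
  simp only [axialMatrix, diag_apply, of_apply, cons_val', Matrix.cons_val]
  ring

theorem axialMatrix_swap (i j : Fin 4) (hij : i ≠ j) : axialMatrix a j i = -axialMatrix a i j := by
  fin_cases i <;> fin_cases j <;> simp_all [axialMatrix]

theorem abs_axialMatrix_le_one (i j : Fin 4) (hij : i ≠ j) : |axialMatrix a i j| ≤ 1 := by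
  fin_cases i <;> fin_cases j <;> simp_all [axialMatrix]

theorem axialBound_axialMatrix (a : ℤ) (s : Fin 4 → ℤ) :
    axialBound (axialMatrix a) s =
      ![2 * a + (1 - |s 2| - s 0 * s 2) + (1 - |s 3| + s 0 * s 3),
        2 * a + (1 - |s 2| - s 1 * s 2) + (1 - |s 3| + s 1 * s 3),
        2 * a - 1 + (1 - |s 0| + s 2 * s 0) + (1 - |s 1| + s 2 * s 1) + (1 - |s 3| + s 2 * s 3),
        2 * a - 1 + (1 - |s 0| - s 3 * s 0) + (1 - |s 1| - s 3 * s 1) +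
          (1 - |s 2| - s 3 * s 2)] := by
  have h0 : (univ.erase 0 : Finset (Fin 4)) = {1, 2, 3} := by decide
  have h1 : (univ.erase 1 : Finset (Fin 4)) = {0, 2, 3} := by decide
  have h2 : (univ.erase 2 : Finset (Fin 4)) = {0, 1, 3} := by decide
  have h3 : (univ.erase 3 : Finset (Fin 4)) = {0, 1, 2} := by decide
  ext i
  fin_cases i <;> simp [axialBound, axialMatrix, *] <;> ring

theorem sum_abs_axialMatrix_le (ha : 2 ≤ a) (i : Fin 4) :
    ∑ j ∈ univ.erase i, |axialMatrix a i j| ≤ axialMatrix a i i := by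
  have hsum := add_sum_erase univ (|axialMatrix a i ·|) (mem_univ i)
  rw [← eq_sub_iff_add_eq'] at hsum
  rw [hsum, Fin.sum_univ_four]
  fin_cases i <;> simp [axialMatrix] <;> grind

theorem l1Norm_fin_four (x : Fin 4 → ℤ) : l1Norm x = |x 0| + |x 1| + |x 2| + |x 3| :=
  Fin.sum_univ_four _

namespace IsPartialSigning

theorem exists_update_of_eq_two_or_three (h : IsPartialSigning (axialMatrix a) s x) (ha : 2 ≤ a)
    (hnorm : l1Norm x ≤ 2 * a) (h₀ : x 0 = 0 → s 0 = 0) (h₁ : x 1 = 0 → s 1 = 0) {j : Fin 4}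
    (hj : j = 2 ∨ j = 3) :
    ∃ t ≠ 0, IsPartialSigning (axialMatrix a) (Function.update s j t) x := by
  refine h.exists_update_of_not_conflict (sum_abs_axialMatrix_le ha) abs_axialMatrix_le_one
    fun hsj i hij i' hij' hi hxi hi' hxi' ↦ ?_
  obtain ⟨hs, hsx, -⟩ := h
  -- Opposite demands of `x i` and `x i'` on `s j` force `|x i| + |x i'| ≥ 2a`, with equality only
  -- if `s` is nonzero at another of the coordinates `0` and `1`, where then `x` is nonzero too.
  simp only [Fin.forall_fin_succ] at hs hsx
  rw [l1Norm_fin_four] at hnorm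
  rw [axialBound_axialMatrix] at hxi hxi'
  rcases hj with rfl | rfl <;> fin_cases i <;> fin_cases i' <;>
    simp [axialMatrix, hsj] at hij hij' hi hi' hxi hxi' hs hsx
  all_goals grind

theorem exists_update_of_eq_zero_or_one (h : IsPartialSigning (axialMatrix a) s x) (ha : 2 ≤ a)
    (hnorm : l1Norm x ≤ 2 * a) (hx : x 0 = 0 → x 1 = 0 → s 2 = -s 3) {j : Fin 4}
    (hj : j = 0 ∨ j = 1) :
    ∃ t ≠ 0, IsPartialSigning (axialMatrix a) (Function.update s j t) x := by
  refine h.exists_update_of_not_conflict (sum_abs_axialMatrix_le ha) abs_axialMatrix_le_one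
    fun hsj i hij i' hij' hi hxi hi' hxi' ↦ ?_
  obtain ⟨hs, hsx, -⟩ := h
  -- Only `x 2` and `x 3` restrict `s j`. They do so in opposite ways only if `s 2 = s 3`, and then
  -- `|x 2| + |x 3| ≥ 2a`, so that `x 0 = x 1 = 0`.
  simp only [Fin.forall_fin_succ] at hs hsx
  rw [l1Norm_fin_four] at hnorm
  rw [axialBound_axialMatrix] at hxi hxi'
  rcases hj with rfl | rfl <;> fin_cases i <;> fin_cases i' <;>
    simp [axialMatrix, hsj] at hij hij' hi hi' hxi hxi' hs hsx
  all_goals grind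

theorem exists_forall_ne_zero (h : IsPartialSigning (axialMatrix a) s x) (ha : 2 ≤ a)
    (hnorm : l1Norm x ≤ 2 * a) (h₀ : x 0 = 0 → s 0 = 0) (h₁ : x 1 = 0 → s 1 = 0)
    (hx : x 0 = 0 → x 1 = 0 → x 2 * x 3 < 0) :
    ∃ s', IsPartialSigning (axialMatrix a) s' x ∧ ∀ i, s' i ≠ 0 := by
  obtain ⟨t₂, ht₂, h⟩ := h.exists_update_of_eq_two_or_three ha hnorm h₀ h₁ (.inl rfl)
  obtain ⟨t₃, ht₃, h⟩ := h.exists_update_of_eq_two_or_three ha hnorm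
    (by simpa using h₀) (by simpa using h₁) (.inr rfl)
  obtain ⟨t₀, ht₀, h⟩ := h.exists_update_of_eq_zero_or_one ha hnorm
    (fun hx₀ hx₁ ↦ h.eq_neg_of_mul_neg (hx hx₀ hx₁)) (.inl rfl)
  obtain ⟨t₁, ht₁, h⟩ := h.exists_update_of_eq_zero_or_one ha hnorm
    (fun hx₀ hx₁ ↦ h.eq_neg_of_mul_neg (hx hx₀ hx₁)) (.inr rfl)
  refine ⟨_, h, fun i ↦ ?_⟩
  fin_cases i <;> simp [*]

end IsPartialSigning

namespace IsShortest

theorem l1Norm_ne_of_mul_neg (hx : IsShortest (coveringLattice a) x) (ha : 2 ≤ a)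
    (hgen : x 0 = 0 → x 1 = 0 → x 2 * x 3 < 0) : l1Norm x ≠ 2 * a := fun hnorm ↦ by
  have hdiag (i : Fin 4) : |x i| ≤ axialMatrix a i i := by
    rw [l1Norm_fin_four] at hnorm
    fin_cases i <;> simp [axialMatrix]
    · grind
    · grind
    all_goals
      have := mul_neg_iff (a := x 2) (b := x 3)
      grind
  have hsign := hx.isPartialSigning_sign (axialMatrix_mem_coveringLattice a)
    abs_axialMatrix_le_one hdiag
  obtain ⟨s, hs, hs₀⟩ := hsign.exists_forall_ne_zero ha hnorm.le (by simp +contextual)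
    (by simp +contextual) hgen
  have hcorner := exists_mem_two_nsmul_eq_vecMul (axialMatrix_mem_coveringLattice a)
    (corner_mem_coveringLattice a) (two_nsmul_corner a) fun i ↦ hs.eq_one_or_eq_neg_one (hs₀ i)
  have htrace := hx.four_mul_l1Norm_le_trace axialMatrix_swap hs hs₀ hcorner
  rw [trace_axialMatrix] at htrace
  omega

theorem l1Norm_ne_of_nonneg (hx : IsShortest (coveringLattice a) x) (ha : 2 ≤ a)
    (h₀ : x 0 = 0) (h₁ : x 1 = 0) (h₂ : 0 ≤ x 2) (h₃ : 0 ≤ x 3) :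
    l1Norm x ≠ 2 * a := fun hnorm ↦ by
  have hP := axialMatrix_mem_coveringLattice a
  have hsum : x 2 + x 3 = 2 * a := by
    rw [← hnorm, l1Norm_fin_four, h₀, h₁, abs_of_nonneg h₂, abs_of_nonneg h₃]
    simp
  have hdist {w₀ w₁ w₂ w₃ : ℤ} (hw : ![w₀, w₁, w₂, w₃] ∈ coveringLattice a) :
      2 * a ≤ |w₀| + |w₁| + |x 2 - w₂| + |x 3 - w₃| := by
    have h := hx _ hw
    rw [hnorm, l1Norm_fin_four] at h
    simpa [h₀, h₁] using h
  have hp₃ := hdist (hP 3)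
  have hp₂₃ := hdist (w₀ := 0) (w₁ := 0) (w₂ := 2 * a) (w₃ := 2 * a - 2) <| by
    convert add_mem (hP 2) (hP 3) using 1
    ext j; fin_cases j <;> simp [axialMatrix]; ring
  -- If `a = 2`, the previous two vectors are not closer than `0` to `(0, 0, 0, 2a)`.
  have hcorner := hdist (w₀ := 2 - a) (w₁ := 2 - a) (w₂ := 1 - a) (w₃ := 3 * a) <| by
    convert sub_mem (sub_mem (add_mem (corner_mem_coveringLattice a) (hP 3)) (hP 2))
      (add_mem (hP 0) (hP 1)) using 1
    ext j
    fin_cases j <;> simp [axialMatrix, -cons_sub, -cons_add] <;> ring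
  have hx₃ : 2 * a - 1 ≤ x 3 := by
    by_contra! hlt
    rw [abs_zero, abs_of_nonpos (by linarith), abs_of_nonpos (by linarith)] at hp₂₃
    linarith
  obtain hx₃ | hx₃ : x 3 = 2 * a - 1 ∨ x 3 = 2 * a := by omega
  · have hx₂ : x 2 = 1 := by linarith
    rw [hx₂, hx₃, sub_self, sub_self, abs_one, abs_zero] at hp₃
    linarith
  · have hx₂ : x 2 = 0 := by linarith
    rw [hx₂, hx₃, zero_sub, sub_sub_cancel, abs_neg, abs_one] at hp₃
    obtain rfl : a = 2 := by linarith
    simp [hx₂, hx₃] at hcorner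

theorem l1Norm_lt (hx : IsShortest (coveringLattice a) x) (ha : 2 ≤ a) : l1Norm x < 2 * a := by
  by_contra! hge
  obtain ⟨y, hy, hnorm⟩ := hx.exists_l1Norm_eq (by linarith) hge
  by_cases hgen : y 0 = 0 → y 1 = 0 → y 2 * y 3 < 0
  · exact hy.l1Norm_ne_of_mul_neg ha hgen hnorm
  push Not at hgen
  obtain ⟨h₀, h₁, h₂₃⟩ := hgen
  obtain ⟨h₂, h₃⟩ | ⟨h₂, h₃⟩ := mul_nonneg_iff.1 h₂₃
  · exact hy.l1Norm_ne_of_nonneg ha h₀ h₁ h₂ h₃ hnorm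
  · exact hy.neg.l1Norm_ne_of_nonneg ha (by simp [h₀]) (by simp [h₁]) (by simpa) (by simpa)
      (by rw [l1Norm_neg, hnorm])

end IsShortest

end CoveringLattice

/-- For odd `k ≥ 3`, `a = (k+1)/2`, the lattice `L` spanned by the four given vectors
satisfies `S_k + L = ℤ⁴`: every point of `ℤ⁴` is within `l¹`-distance `k` of `L`. -/
theorem lattice_covers_odd (k a : ℤ) (hk : 3 ≤ k) (hko : Odd k) (ha : a = (k + 1) / 2)
    (v₁ v₂ v₃ v₄ : Fin 4 → ℤ)
    (hv₁ : v₁ = ![-a + 1, a + 1, -a + 1, a])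
    (hv₂ : v₂ = ![a + 1, a + 1, -a + 2, a - 1])
    (hv₃ : v₃ = ![-a - 1, a - 1, a - 1, -a])
    (hv₄ : v₄ = ![-a, a, a, a - 1])
    (L : Submodule ℤ (Fin 4 → ℤ))
    (hL : L = Submodule.span ℤ {v₁, v₂, v₃, v₄}) :
    ∀ x : Fin 4 → ℤ, ∃ w ∈ L,
      |x 0 - w 0| + |x 1 - w 1| + |x 2 - w 2| + |x 3 - w 3| ≤ k := by
  intro x
  have hka : k = 2 * a - 1 := by grind
  have hcover : L = coveringLattice a := by rw [hL, hv₁, hv₂, hv₃, hv₄, coveringLattice]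
  obtain ⟨w, hw, hshort⟩ := exists_isShortest_sub (coveringLattice a) x
  have hlt := hshort.l1Norm_lt (by omega)
  rw [l1Norm_fin_four] at hlt
  exact ⟨w, hcover ▸ hw, by simpa only [Pi.sub_apply, hka] using Int.le_sub_one_of_lt hlt⟩
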